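/- Let n ≥ 1, 1 < p < ∞ and 0 < s < 1. For ε > 0 and ξ ∈ ℍⁿ₊ define g_ε(ξ) = ∫_{{ξ' : d(ξ⁻¹∘ξ') ≥ ε}} J_p(x₁^s − ((x₁')₊)^s) / d(ξ⁻¹∘ξ')^{Q+sp} dξ', where (x₁')₊ = max{x₁',0}. Then g_ε → 0 strongly in L¹_{loc}(ℍⁿ₊) as ε → 0; that is, for every compact K ⊂ ℍⁿ₊, lim_{ε→0} ∫_K |g_ε(ξ)| dξ = 0. -/

import Mathlib

/-!
Left translations preserve Lebesgue measure, so with `ν = d(η)^{-(Q+sp)} dη` (`nu`) the truncated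
integral is `g_ε(ξ) = ∫_{d(η) ≥ ε} J_p(x₁^s - (x₁ + η₁)₊^s) dν(η)`, where `η₁` is the first
coordinate of `η`. Dilating by `x₁` gives `g_ε(ξ) = x₁^{-s} G(ε / x₁)` (`gHeis_eq`) with
`G(r) = ∫_{d(η) ≥ r} f(η₁) dν(η)` and `f(h) = J_p(1 - (1+h)₊^s)` (`gModel`, `prof`). On a compact
subset of the half-space `x₁` is bounded below, so it suffices that `G(r) → 0` as `r → 0`
(`tendsto_gModel`), and the convergence is even uniform on compact sets.

The inversion `η ↦ -η` preserves `ν` and `d`, so `G(r)` is the integral of `f(η₁) + f(-η₁)` over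
`{d(η) ≥ r, η₁ > 0}` (`gModel_eq`). The norm truncation is not a truncation in `η₁`, but this does
not matter: the symmetrized integrand is `ν`-integrable on all of `{η₁ > 0}`, so dominated
convergence removes the truncation. Both this integrability and the value of the limit reduce to
dimension one, because homogeneity of `ν` under dilations forces its image under `η ↦ η₁` on
`(0,∞)` to be a finite multiple of `h^{-1-sp} dh` (`map_x1_nu_restrict`).

It remains to prove that `(f(h) + f(-h)) h^{-1-sp}` is integrable on `(0,∞)` with integral `0`
(`integrableOn_profSum`, `integral_profSum`). Put `φ(τ) = (1-τ^s)^{p-1} (1-τ)^{-1-sp}` and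
`Ψ(τ) = ∫₀^τ φ`. The substitution `τ = 1 - h` turns `f(-h) h^{-1-sp} dh` on `(0,1)` into
`φ(τ) dτ`, while `τ = 1/(1+h)` turns `f(h) h^{-1-sp} dh` into `-φ(τ) τ^{s-1} dτ`. The function
`A(τ) = (1-τ^s)^p (1-τ)^{-sp} / (sp)` satisfies `A' = φ (1 - τ^{s-1})`, so
`T(h) = -Ψ(1-h) + Ψ(1/(1+h)) - A(1/(1+h))` is a primitive of the symmetrized integrand on `(0,1)`
and tends to `0` at `0` (`tendsto_T_zero`). By concavity of `x ↦ x^s` the integrand is nonnegative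
on `(0,1)`, so the existence of this primitive already yields integrability near `0`. On `(1,∞)`,
where `f(-h) = 1`, both terms have explicit primitives, and the contributions sum to zero.
-/

open MeasureTheory Real Filter Topology ENNReal

noncomputable section

/-- The Heisenberg group `ℍⁿ` as `ℝⁿ × ℝⁿ × ℝ`. -/
abbrev Heis (n : ℕ) : Type := (Fin n → ℝ) × (Fin n → ℝ) × ℝ

/-- Group law `ξ ∘ ξ' = (x+x', y+y', t+t'+2⟨y,x'⟩−2⟨x,y'⟩)`. -/
def Hmul {n : ℕ} (a b : Heis n) : Heis n :=
  (a.1 + b.1, a.2.1 + b.2.1,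
    a.2.2 + b.2.2 + 2 * (∑ i, a.2.1 i * b.1 i) - 2 * (∑ i, a.1 i * b.2.1 i))

/-- Group inverse `ξ⁻¹ = −ξ`. -/
def Hinv {n : ℕ} (a : Heis n) : Heis n := (-a.1, -a.2.1, -a.2.2)

/-- Squared Euclidean norm of the horizontal part `z = (x,y) ∈ ℝ^{2n}`. -/
def zsq {n : ℕ} (a : Heis n) : ℝ := (∑ i, (a.1 i) ^ 2) + (∑ i, (a.2.1 i) ^ 2)

/-- Euclidean norm `|z|` of the horizontal part. -/
def znorm {n : ℕ} (a : Heis n) : ℝ := Real.sqrt (zsq a)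

/-- The Koranyi–Folland gauge `d(ξ) = (|z|⁴ + t²)^{1/4}`. -/
def hd {n : ℕ} (a : Heis n) : ℝ := ((zsq a) ^ 2 + (a.2.2) ^ 2) ^ ((1 : ℝ) / 4)

/-- Homogeneous dimension `Q = 2n + 2` (as a real number). -/
def hQ (n : ℕ) : ℝ := 2 * n + 2

/-- First coordinate `x₁` of a point of `ℍⁿ`. -/
def x1 {n : ℕ} (a : Heis n) : ℝ := if h : 0 < n then a.1 ⟨0, h⟩ else 0

/-- The half-space `ℍⁿ₊ = {ξ : x₁ > 0}`. -/
def halfSpace (n : ℕ) : Set (Heis n) := {a | 0 < x1 a}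

/-- Euclidean distance `|z - z'|` of the horizontal parts. -/
def zdist {n : ℕ} (a b : Heis n) : ℝ := znorm (Hmul (Hinv a) b)

/-- `J_p(t) = |t|^{p-2} t`. -/
def Jp (p t : ℝ) : ℝ := |t| ^ (p - 2) * t

/-- The Gagliardo-type seminorm (to the `p`-th power)
`[f]_{s,p,α,Ω}^p = ∫_Ω ∫_Ω |f(ξ)-f(ξ')|^p / (d(ξ⁻¹∘ξ')^{Q+sp} |z-z'|^α)`. -/
def gagSem {n : ℕ} (p s α : ℝ) (Ω : Set (Heis n)) (f : Heis n → ℝ) : ℝ≥0∞ :=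
  ∫⁻ ξ in Ω, ∫⁻ ξ' in Ω, ENNReal.ofReal
    (|f ξ - f ξ'| ^ p / (hd (Hmul (Hinv ξ) ξ') ^ (hQ n + s * p) * zdist ξ ξ' ^ α))

/-- The seminorm for `α = 0` (no horizontal weight). -/
def gagSem0 {n : ℕ} (p s : ℝ) (Ω : Set (Heis n)) (f : Heis n → ℝ) : ℝ≥0∞ :=
  ∫⁻ ξ in Ω, ∫⁻ ξ' in Ω, ENNReal.ofReal
    (|f ξ - f ξ'| ^ p / hd (Hmul (Hinv ξ) ξ') ^ (hQ n + s * p))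

/-- The strip `𝒟_{r,R} = {ξ : r < x₁ < R}`. -/
def strip (n : ℕ) (r R : ℝ) : Set (Heis n) := {ξ | r < x1 ξ ∧ x1 ξ < R}

/-- `f ∈ W^{s,p,α}_{loc(x₁)}(ℍⁿ₊)`. -/
def MemWlocx1 (n : ℕ) (p s α : ℝ) (f : Heis n → ℝ) : Prop :=
  Measurable f ∧ ∀ r R : ℝ, 0 < r → r < R →
    (∫⁻ ξ in strip n r R, ENNReal.ofReal (|f ξ| ^ p)) < ⊤ ∧
    gagSem p s α (strip n r R) f < ⊤

/-- `f ∈ L^{p-1}_{sp,α}(ℍⁿ)`. -/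
def MemLsp (n : ℕ) (p s α : ℝ) (f : Heis n → ℝ) : Prop :=
  Measurable f ∧
  (∀ K : Set (Heis n), IsCompact K →
    (∫⁻ ξ in K, ENNReal.ofReal (|f ξ| ^ (p - 1))) < ⊤) ∧
  (∫⁻ ξ, ENNReal.ofReal (|f ξ| ^ (p - 1) /
      ((1 + hd ξ) ^ (hQ n + s * p) * (1 + znorm ξ) ^ α))) < ⊤

/-- `φ ∈ W^{s,p,α}(Ω)`. -/
def MemW (n : ℕ) (p s α : ℝ) (Ω : Set (Heis n)) (φ : Heis n → ℝ) : Prop :=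
  Measurable φ ∧ (∫⁻ ξ in Ω, ENNReal.ofReal (|φ ξ| ^ p)) < ⊤ ∧ gagSem p s α Ω φ < ⊤

/-- `φ ∈ W^{s,p}(Ω)` (the case `α = 0`). -/
def MemW0 (n : ℕ) (p s : ℝ) (Ω : Set (Heis n)) (φ : Heis n → ℝ) : Prop :=
  Measurable φ ∧ (∫⁻ ξ in Ω, ENNReal.ofReal (|φ ξ| ^ p)) < ⊤ ∧ gagSem0 p s Ω φ < ⊤

/-- `f ∈ W^{s,p}_{loc}(ℍⁿ₊)`. -/
def MemWloc0 (n : ℕ) (p s : ℝ) (f : Heis n → ℝ) : Prop :=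
  Measurable f ∧ ∀ K : Set (Heis n), IsCompact K → K ⊆ halfSpace n →
    (∫⁻ ξ in K, ENNReal.ofReal (|f ξ| ^ p)) < ⊤ ∧ gagSem0 p s K f < ⊤

/-- `f ∈ L^{p-1}_{sp}(ℍⁿ)`. -/
def MemLsp0 (n : ℕ) (p s : ℝ) (f : Heis n → ℝ) : Prop :=
  Measurable f ∧
  (∀ K : Set (Heis n), IsCompact K →
    (∫⁻ ξ in K, ENNReal.ofReal (|f ξ| ^ (p - 1))) < ⊤) ∧
  (∫⁻ ξ, ENNReal.ofReal (|f ξ| ^ (p - 1) / (1 + hd ξ) ^ (hQ n + s * p))) < ⊤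

/-- Surface measure of the unit sphere `S^{m-1} ⊂ ℝ^m`: `|S^{m-1}| = 2π^{m/2}/Γ(m/2)`. -/
def sphereArea (m : ℕ) : ℝ := 2 * Real.pi ^ ((m : ℝ) / 2) / Real.Gamma ((m : ℝ) / 2)

/-- `ℐ(k,θ,α) = (∫₀^∞ (1+t²)^{-(k+2+θ)/4} dt) (∫₀^∞ r^{k-2}(1+r²)^{-(k+θ+α)/2} dr)`. -/
def calI (k : ℕ) (θ α : ℝ) : ℝ :=
  (∫ t in Set.Ioi (0 : ℝ), (1 + t ^ 2) ^ (-(((k : ℝ) + 2 + θ) / 4))) *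
  (∫ r in Set.Ioi (0 : ℝ), r ^ ((k : ℝ) - 2) * (1 + r ^ 2) ^ (-(((k : ℝ) + θ + α) / 2)))

/-- `Λ_{s,p,α} = 2∫₀¹ |1-τ^{(sp+α-1)/p}|^p/(1-τ)^{1+sp+α} dτ + 2/(sp+α)`. -/
def LamC (s p α : ℝ) : ℝ :=
  2 * (∫ τ in Set.Ioo (0 : ℝ) 1,
      |1 - τ ^ ((s * p + α - 1) / p)| ^ p / (1 - τ) ^ (1 + s * p + α)) + 2 / (s * p + α)

/-- `u_β(τ) = τ^β` for `τ > 0`, extended by `0`. -/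
def ubeta (β τ : ℝ) : ℝ := if 0 < τ then τ ^ β else 0

/-- `λ(β,s,p)`. -/
def lam (p s β : ℝ) : ℝ :=
  2 * (∫ τ in Set.Ioo (0 : ℝ) 1,
      Jp p (1 - τ ^ β) * (1 - τ ^ (s * p - 1 - β * (p - 1))) / (1 - τ) ^ (1 + s * p)) +
  2 / (s * p)

/-- `λ_ε(β,s,p)`. -/
def lamEps (p s β ε : ℝ) : ℝ :=
  2 * (∫ τ in Set.Ioo (0 : ℝ) (1 / (1 + ε)), Jp p (1 - τ ^ β) / |1 - τ| ^ (1 + s * p)) +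
  2 * (∫ τ in Set.Ioi (1 + ε), Jp p (1 - τ ^ β) / |1 - τ| ^ (1 + s * p)) +
  2 / (s * p)

/-- The box `D_{R₀}`. -/
def boxD (n : ℕ) (R₀ : ℝ) : Set (Heis n) :=
  {ξ | (∀ i, |ξ.1 i| ≤ R₀) ∧ (∀ i, |ξ.2.1 i| ≤ R₀) ∧ |ξ.2.2| ≤ R₀ ^ 2}

/-- The box `D_{R₀,t}`. -/
def boxDt (n : ℕ) (R₀ : ℝ) : Set (Heis n) :=
  {ξ | (∀ i, |ξ.1 i| ≤ R₀) ∧ (∀ i, |ξ.2.1 i| ≤ R₀) ∧ |ξ.2.2| ≤ R₀ ^ 2 + R₀}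

/-- The truncated kernel integral `g_ε` on the Heisenberg group. -/
def gHeis (n : ℕ) (p s ε : ℝ) (ξ : Heis n) : ℝ :=
  ∫ ξ' in {ξ' : Heis n | ε ≤ hd (Hmul (Hinv ξ) ξ')},
    Jp p (x1 ξ ^ s - (max (x1 ξ') 0) ^ s) / hd (Hmul (Hinv ξ) ξ') ^ (hQ n + s * p)

/-! ### The one-dimensional principal value -/

/-- The profile `f(h) = J_p(1 - (1+h)₊^s)`, the numerator of `g_ε` at height `x₁ = 1` when the first
coordinate is displaced by `h`. -/
def prof (p s h : ℝ) : ℝ := Jp p (1 - (max (1 + h) 0) ^ s)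

/-- The density `φ(τ) = (1-τ^s)^{p-1} (1-τ)^{-1-sp}`. -/
def phi (p s τ : ℝ) : ℝ := (1 - τ ^ s) ^ (p - 1) * (1 - τ) ^ (-1 - s * p)

/-- `A(τ) = (1-τ^s)^p (1-τ)^{-sp} / (sp)`. -/
def primA (p s τ : ℝ) : ℝ := (1 - τ ^ s) ^ p * (1 - τ) ^ (-(s * p)) / (s * p)

/-- `Ψ(τ) = ∫₀^τ φ`. -/
def Psi (p s τ : ℝ) : ℝ := ∫ u in (0 : ℝ)..τ, phi p s u

section OneDim
variable {p s : ℝ}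

lemma Jp_of_nonneg (hp1 : 1 < p) {t : ℝ} (ht : 0 ≤ t) : Jp p t = t ^ (p - 1) := by
  unfold Jp
  rcases ht.eq_or_lt with rfl | h
  · rw [mul_zero, Real.zero_rpow (by linarith)]
  · rw [abs_of_pos h, ← Real.rpow_add_one h.ne']; congr 1; ring

lemma Jp_neg (p t : ℝ) : Jp p (-t) = -Jp p t := by unfold Jp; rw [abs_neg]; ring

lemma prof_neg_of_le (hp1 : 1 < p) (hs0 : 0 < s) {h : ℝ} (h0 : 0 ≤ h) (h1 : h ≤ 1) :
    prof p s (-h) = (1 - (1 - h) ^ s) ^ (p - 1) := by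
  unfold prof
  rw [max_eq_left (by linarith), ← sub_eq_add_neg, Jp_of_nonneg hp1]
  have := Real.rpow_le_one (by linarith : 0 ≤ 1 - h) (by linarith) hs0.le
  linarith

lemma prof_neg_of_ge (hp1 : 1 < p) (hs0 : 0 < s) {h : ℝ} (h1 : 1 ≤ h) : prof p s (-h) = 1 := by
  unfold prof
  rw [max_eq_right (by linarith), Real.zero_rpow hs0.ne', sub_zero, Jp_of_nonneg hp1 zero_le_one,
    Real.one_rpow]

lemma prof_of_nonneg (hp1 : 1 < p) (hs0 : 0 < s) {h : ℝ} (h0 : 0 ≤ h) :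
    prof p s h = -((1 + h) ^ s - 1) ^ (p - 1) := by
  unfold prof
  have := Real.one_le_rpow (by linarith : 1 ≤ 1 + h) hs0.le
  rw [max_eq_left (by linarith), ← neg_sub, Jp_neg, Jp_of_nonneg hp1 (by linarith)]

lemma continuousAt_phi (hp1 : 1 < p) (hs0 : 0 < s) {τ : ℝ} (h : τ < 1) :
    ContinuousAt (phi p s) τ := by
  unfold phi
  apply ContinuousAt.mul
  · exact ((continuous_const.sub (Real.continuous_rpow_const hs0.le)).rpow_const
      (fun _ => Or.inr (by linarith))).continuousAt
  · exact (continuousAt_const.sub continuousAt_id).rpow_const (Or.inl (by simp; linarith))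

lemma continuousOn_phi (hp1 : 1 < p) (hs0 : 0 < s) : ContinuousOn (phi p s) (Set.Iio 1) :=
  fun _ h => (continuousAt_phi hp1 hs0 h).continuousWithinAt

lemma intervalIntegrable_phi (hp1 : 1 < p) (hs0 : 0 < s) {a b : ℝ} (ha : a < 1) (hb : b < 1) :
    IntervalIntegrable (phi p s) volume a b := by
  apply ContinuousOn.intervalIntegrable
  apply (continuousOn_phi hp1 hs0).mono
  intro x hx
  exact lt_of_le_of_lt hx.2 (max_lt ha hb)

lemma hasDerivAt_Psi (hp1 : 1 < p) (hs0 : 0 < s) {τ : ℝ} (h : τ < 1) :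
    HasDerivAt (Psi p s) (phi p s τ) τ := by
  apply intervalIntegral.integral_hasDerivAt_right
    (intervalIntegrable_phi hp1 hs0 zero_lt_one h)
  · exact (continuousOn_phi hp1 hs0).stronglyMeasurableAtFilter isOpen_Iio τ h
  · exact continuousAt_phi hp1 hs0 h

lemma continuousAt_primA (hp1 : 1 < p) (hs0 : 0 < s) {τ : ℝ} (h : τ < 1) :
    ContinuousAt (primA p s) τ := by
  unfold primA
  apply ContinuousAt.div_const
  apply ContinuousAt.mul
  · exact ((continuous_const.sub (Real.continuous_rpow_const hs0.le)).rpow_const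
      (fun _ => Or.inr (by linarith))).continuousAt
  · exact (continuousAt_const.sub continuousAt_id).rpow_const (Or.inl (by simp; linarith))

/-- The exact-derivative identity `A' = φ·(1 - τ^{s-1})`, responsible for the cancellation. -/
lemma hasDerivAt_primA (hp1 : 1 < p) (hs0 : 0 < s) {τ : ℝ} (h0 : 0 < τ) (h : τ < 1) :
    HasDerivAt (primA p s) (phi p s τ * (1 - τ ^ (s - 1))) τ := by
  have hB : 0 < 1 - τ := by linarith
  have hA : 0 < 1 - τ ^ s := by have := Real.rpow_lt_one h0.le h hs0; linarith
  have hsp : s * p ≠ 0 := by positivity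
  have d1 : HasDerivAt (fun τ : ℝ => (1 - τ ^ s) ^ p)
      (-(s * τ ^ (s - 1)) * p * (1 - τ ^ s) ^ (p - 1)) τ := by
    have := (Real.hasDerivAt_rpow_const (p := s) (Or.inl h0.ne')).const_sub 1
    exact this.rpow_const (Or.inl hA.ne')
  have d2 : HasDerivAt (fun τ : ℝ => (1 - τ) ^ (-(s * p)))
      (-1 * (-(s * p)) * (1 - τ) ^ (-(s * p) - 1)) τ := by
    have := (hasDerivAt_id τ).const_sub 1
    exact this.rpow_const (Or.inl hB.ne')
  have := (d1.mul d2).div_const (s * p)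
  refine this.congr_deriv ?_
  unfold phi
  have e1 : (1 - τ ^ s) ^ p = (1 - τ ^ s) ^ (p - 1) * (1 - τ ^ s) := by
    rw [← Real.rpow_add_one hA.ne']; congr 1; ring
  have e2 : (1 - τ) ^ (-(s * p)) = (1 - τ) ^ (-1 - s * p) * (1 - τ) := by
    rw [← Real.rpow_add_one hB.ne']; congr 1; ring
  have e3 : τ ^ s = τ ^ (s - 1) * τ := by
    rw [← Real.rpow_add_one h0.ne']; congr 1; ring
  have e4 : -(s * p) - 1 = -1 - s * p := by ring
  rw [e1, e2, e4]
  rw [div_eq_iff hsp]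
  generalize (1 - τ ^ s) ^ (p - 1) = X
  generalize (1 - τ) ^ (-1 - s * p) = Y
  rw [e3]
  ring

/-- Primitive of `f(-h) h^{-1-sp}` on `(0,1)`. -/
lemma hasDerivAt_T1 (hp1 : 1 < p) (hs0 : 0 < s) {h : ℝ} (h0 : 0 < h) :
    HasDerivAt (fun h => -Psi p s (1 - h))
      ((1 - (1 - h) ^ s) ^ (p - 1) * h ^ (-1 - s * p)) h := by
  have h1 := (hasDerivAt_Psi hp1 hs0 (τ := 1 - h) (by linarith)).comp h
    ((hasDerivAt_id h).const_sub 1)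
  refine h1.neg.congr_deriv ?_
  unfold phi
  simp

/-- Primitive of `f(h) h^{-1-sp}` on `(0,∞)`, from the substitution `τ = 1/(1+h)`. -/
lemma hasDerivAt_T2 (hp1 : 1 < p) (hs0 : 0 < s) {h : ℝ} (h0 : 0 < h) :
    HasDerivAt (fun h => Psi p s ((1 + h)⁻¹) - primA p s ((1 + h)⁻¹))
      (prof p s h * h ^ (-1 - s * p)) h := by
  set τ := (1 + h)⁻¹ with hτ
  have hh : 0 < 1 + h := by linarith
  have t0 : 0 < τ := by positivity
  have t1 : τ < 1 := inv_lt_one_of_one_lt₀ (by linarith)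
  have hB : 0 < 1 - τ := by linarith
  have hA : 0 < 1 - τ ^ s := by have := Real.rpow_lt_one t0.le t1 hs0; linarith
  have d0 : HasDerivAt (fun h : ℝ => (1 + h)⁻¹) (-1 / (1 + h) ^ 2) h :=
    ((hasDerivAt_id h).const_add 1).fun_inv hh.ne'
  have dG := (hasDerivAt_Psi hp1 hs0 t1).sub (hasDerivAt_primA hp1 hs0 t0 t1)
  have := HasDerivAt.comp h (h₂ := fun τ => Psi p s τ - primA p s τ) dG d0
  refine this.congr_deriv ?_
  rw [prof_of_nonneg hp1 hs0 h0.le]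
  unfold phi
  have e0 : (1 + h) = τ⁻¹ := by rw [hτ, inv_inv]
  have eh : h = (1 - τ) * τ⁻¹ := by rw [sub_mul, mul_inv_cancel₀ t0.ne', ← e0]; ring
  have e1 : (1 + h) ^ s - 1 = (1 - τ ^ s) * τ ^ (-s) := by
    rw [e0, Real.inv_rpow t0.le, Real.rpow_neg t0.le, sub_mul,
      mul_inv_cancel₀ (Real.rpow_pos_of_pos t0 s).ne']; ring
  have e2 : h ^ (-1 - s * p) = (1 - τ) ^ (-1 - s * p) * τ ^ (1 + s * p) := by
    conv_lhs => rw [eh]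
    rw [Real.mul_rpow hB.le (by positivity), Real.inv_rpow t0.le, ← Real.rpow_neg t0.le]
    congr 2; ring
  rw [e2, e1, Real.mul_rpow hA.le (by positivity), ← Real.rpow_mul t0.le, e0]
  have e3 : τ ^ (-s * (p - 1)) * τ ^ (1 + s * p) = τ ^ (s - 1) * τ ^ 2 := by
    rw [← Real.rpow_add t0, ← Real.rpow_natCast τ 2, ← Real.rpow_add t0]
    congr 1; push_cast; ring
  generalize (1 - τ ^ s) ^ (p - 1) = X
  generalize (1 - τ) ^ (-1 - s * p) = Y
  rw [inv_pow, div_inv_eq_mul]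
  linear_combination (X * Y) * e3

lemma prof_mul_nonpos (hp1 : 1 < p) (hs0 : 0 < s) {h : ℝ} (h0 : 0 < h) :
    prof p s h * h ^ (-1 - s * p) ≤ 0 := by
  rw [prof_of_nonneg hp1 hs0 h0.le]
  have := Real.one_le_rpow (by linarith : 1 ≤ 1 + h) hs0.le
  have : 0 ≤ ((1 + h) ^ s - 1) ^ (p - 1) := Real.rpow_nonneg (by linarith) _
  have : 0 ≤ h ^ (-1 - s * p) := by positivity
  nlinarith

lemma tendsto_T2_atTop (hp1 : 1 < p) (hs0 : 0 < s) :
    Tendsto (fun h => Psi p s ((1 + h)⁻¹) - primA p s ((1 + h)⁻¹)) atTop (𝓝 (-(1 / (s * p)))) := by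
  have t0 : Tendsto (fun h : ℝ => (1 + h)⁻¹) atTop (𝓝 0) :=
    tendsto_inv_atTop_zero.comp (tendsto_atTop_add_const_left _ _ tendsto_id)
  have c := ((hasDerivAt_Psi hp1 hs0 zero_lt_one).continuousAt.sub
    (continuousAt_primA hp1 hs0 zero_lt_one)).tendsto.comp t0
  have e : Psi p s 0 - primA p s 0 = -(1 / (s * p)) := by
    simp [Psi, primA, Real.zero_rpow hs0.ne']
  simp only [Pi.sub_apply, e] at c
  exact c

lemma integrableOn_prof_Ioi (hp1 : 1 < p) (hs0 : 0 < s) :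
    IntegrableOn (fun h => prof p s h * h ^ (-1 - s * p)) (Set.Ioi 1) :=
  integrableOn_Ioi_deriv_of_nonpos' (fun _ hx => hasDerivAt_T2 hp1 hs0
      (zero_lt_one.trans_le hx)) (fun _ hx => prof_mul_nonpos hp1 hs0 (zero_lt_one.trans hx))
      (tendsto_T2_atTop hp1 hs0)

lemma integral_prof_Ioi (hp1 : 1 < p) (hs0 : 0 < s) :
    ∫ h in Set.Ioi (1 : ℝ), prof p s h * h ^ (-1 - s * p) =
      -(1 / (s * p)) - (Psi p s ((1 + 1)⁻¹) - primA p s ((1 + 1)⁻¹)) :=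
  integral_Ioi_of_hasDerivAt_of_nonpos' (fun _ hx => hasDerivAt_T2 hp1 hs0
      (zero_lt_one.trans_le hx)) (fun _ hx => prof_mul_nonpos hp1 hs0 (zero_lt_one.trans hx))
      (tendsto_T2_atTop hp1 hs0)

lemma integrableOn_prof_neg_Ioi (hp1 : 1 < p) (hs0 : 0 < s) :
    IntegrableOn (fun h => prof p s (-h) * h ^ (-1 - s * p)) (Set.Ioi 1) := by
  have hsp : 0 < s * p := by positivity
  refine (integrableOn_Ioi_rpow_of_lt (a := -1 - s * p) (by linarith) zero_lt_one).congr_fun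
    (fun x hx => ?_) measurableSet_Ioi
  simp only [prof_neg_of_ge hp1 hs0 (le_of_lt hx), one_mul]

lemma integral_prof_neg_Ioi (hp1 : 1 < p) (hs0 : 0 < s) :
    ∫ h in Set.Ioi (1 : ℝ), prof p s (-h) * h ^ (-1 - s * p) = 1 / (s * p) := by
  have hsp : 0 < s * p := by positivity
  rw [setIntegral_congr_fun (g := fun h => h ^ (-1 - s * p)) measurableSet_Ioi
    (fun x hx => by simp only [prof_neg_of_ge hp1 hs0 (le_of_lt hx), one_mul]),
    integral_Ioi_rpow_of_lt (by linarith) zero_lt_one, Real.one_rpow]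
  rw [show -1 - s * p + 1 = -(s * p) by ring, neg_div_neg_eq]

/-- Concavity of `x ↦ x^s` makes the symmetrized profile nonnegative near the origin. -/
lemma profSum_nonneg (hp1 : 1 < p) (hs0 : 0 < s) (hs1 : s < 1) {h : ℝ} (h0 : 0 < h) (h1 : h < 1) :
    0 ≤ (prof p s h + prof p s (-h)) * h ^ (-1 - s * p) := by
  apply mul_nonneg _ (by positivity)
  rw [prof_of_nonneg hp1 hs0 h0.le, prof_neg_of_le hp1 hs0 h0.le h1.le]
  have a1 := rpow_one_add_le_one_add_mul_self (by linarith : -1 ≤ h) hs0.le hs1.le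
  have a2 := rpow_one_add_le_one_add_mul_self (by linarith : -1 ≤ -h) hs0.le hs1.le
  rw [← sub_eq_add_neg] at a2
  have := Real.one_le_rpow (by linarith : 1 ≤ 1 + h) hs0.le
  have := Real.rpow_le_rpow (z := p - 1) (by linarith : 0 ≤ (1 + h) ^ s - 1)
    (by linarith : (1 + h) ^ s - 1 ≤ 1 - (1 - h) ^ s) (by linarith)
  linarith

lemma one_sub_rpow_le (hs1 : s < 1) {τ : ℝ} (h0 : 0 < τ) (h : τ < 1) :
    1 - τ ^ s ≤ 1 - τ := by
  have := Real.rpow_le_rpow_of_exponent_ge h0 h.le hs1.le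
  rw [Real.rpow_one] at this
  linarith

/-- Near `h = 0` the two primitives cancel: the two cutoffs `1 - h` and `1/(1+h)` differ by `O(h²)`
while `φ = O(h^{p-2-sp})` between them. -/
lemma tendsto_T_zero (hp1 : 1 < p) (hs0 : 0 < s) (hs1 : s < 1) :
    Tendsto (fun h => -Psi p s (1 - h) + (Psi p s ((1 + h)⁻¹) - primA p s ((1 + h)⁻¹)))
      (𝓝[>] 0) (𝓝 0) := by
  have hsp : 0 < s * p := by positivity
  have hps : 0 < p - s * p := by nlinarith
  have hlim : Tendsto (fun h : ℝ => (2 : ℝ) ^ (1 + s * p) * h ^ (p - s * p)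
      + h ^ (p - s * p) * 1 / (s * p) * 2 ^ (s * p)) (𝓝[>] 0) (𝓝 0) := by
    have c : Continuous (fun h : ℝ => (2 : ℝ) ^ (1 + s * p) * h ^ (p - s * p)
      + h ^ (p - s * p) * 1 / (s * p) * 2 ^ (s * p)) := by
      have := Real.continuous_rpow_const hps.le
      fun_prop
    have := c.tendsto 0
    simp only [Real.zero_rpow hps.ne', mul_zero, zero_mul, zero_div, add_zero] at this
    exact this.mono_left nhdsWithin_le_nhds
  refine squeeze_zero_norm' ?_ hlim
  filter_upwards [Ioo_mem_nhdsGT (zero_lt_one : (0 : ℝ) < 1)] with h ⟨h0, h1⟩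
  have hh : 0 < 1 + h := by linarith
  set τ := (1 + h)⁻¹ with hτ
  have t0 : 0 < τ := by positivity
  have t1 : τ < 1 := inv_lt_one_of_one_lt₀ (by linarith)
  have hτh : τ * (1 + h) = 1 := inv_mul_cancel₀ hh.ne'
  have tl : 1 - h ≤ τ := by nlinarith
  have tm : h / 2 ≤ 1 - τ := by nlinarith
  have tw : |τ - (1 - h)| ≤ h ^ 2 := by rw [abs_of_nonneg (by linarith)]; nlinarith
  have e : -Psi p s (1 - h) + (Psi p s τ - primA p s τ)
      = (∫ u in (1 - h)..τ, phi p s u) - primA p s τ := by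
    unfold Psi
    rw [← intervalIntegral.integral_add_adjacent_intervals (a := 0) (b := 1 - h) (c := τ)
      (intervalIntegrable_phi hp1 hs0 zero_lt_one (by linarith))
      (intervalIntegrable_phi hp1 hs0 (by linarith) t1)]
    ring
  rw [e]
  refine (norm_sub_le _ _).trans (add_le_add ?_ ?_)
  · have := intervalIntegral.norm_integral_le_of_norm_le_const (a := 1 - h) (b := τ)
      (f := phi p s) (C := h ^ (p - 1) * (h / 2) ^ (-1 - s * p)) (fun u hu => ?_)
    · refine this.trans ((mul_le_mul_of_nonneg_left tw (by positivity)).trans_eq ?_)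
      rw [Real.div_rpow h0.le zero_le_two, div_eq_mul_inv, ← Real.rpow_neg zero_le_two,
        show -(-1 - s * p) = 1 + s * p by ring,
        show p - s * p = (p - 1) + (-1 - s * p) + (2 : ℕ) by push_cast; ring,
        Real.rpow_add h0, Real.rpow_add h0, Real.rpow_natCast]
      ring
    · rw [Set.uIoc_of_le tl] at hu
      have u0 : 0 < u := by linarith [hu.1]
      have u1 : u < 1 := by linarith [hu.2]
      have b1 := one_sub_rpow_le hs1 u0 u1
      have b2 := Real.rpow_lt_one u0.le u1 hs0
      unfold phi
      rw [norm_mul, Real.norm_of_nonneg (Real.rpow_nonneg (by linarith) _),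
        Real.norm_of_nonneg (Real.rpow_nonneg (by linarith) _)]
      apply mul_le_mul
      · exact Real.rpow_le_rpow (by linarith) (by linarith [hu.1]) (by linarith)
      · exact Real.rpow_le_rpow_of_nonpos (by linarith) (by linarith [hu.2]) (by linarith)
      · exact Real.rpow_nonneg (by linarith) _
      · positivity
  · unfold primA
    have b1 := one_sub_rpow_le hs1 t0 t1
    have b2 := Real.rpow_lt_one t0.le t1 hs0
    have b3 : 1 - τ ≤ h := by linarith
    rw [norm_div, norm_mul, Real.norm_of_nonneg (Real.rpow_nonneg (by linarith) _),
        Real.norm_of_nonneg (Real.rpow_nonneg (by linarith) _), Real.norm_of_nonneg hsp.le]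
    have k1 : (1 - τ ^ s) ^ p ≤ h ^ p :=
      Real.rpow_le_rpow (by linarith) (by linarith) (by linarith)
    have k2 : (1 - τ) ^ (-(s * p)) ≤ (h / 2) ^ (-(s * p)) :=
      Real.rpow_le_rpow_of_nonpos (by linarith) tm (by linarith)
    have k3 : (1 - τ ^ s) ^ p * (1 - τ) ^ (-(s * p)) ≤ h ^ p * (h / 2) ^ (-(s * p)) :=
      mul_le_mul k1 k2 (Real.rpow_nonneg (by linarith) _) (by positivity)
    refine (div_le_div_of_nonneg_right k3 hsp.le).trans_eq ?_
    rw [Real.div_rpow h0.le zero_le_two, div_eq_mul_inv (h ^ _), ← Real.rpow_neg zero_le_two,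
      neg_neg, show p - s * p = p + -(s * p) by ring, Real.rpow_add h0]
    ring

/-- The primitive of the symmetrized integrand on `[0,1]`, with its limit value `0` at `0`. -/
lemma continuousOn_T (hp1 : 1 < p) (hs0 : 0 < s) (hs1 : s < 1) :
    ContinuousOn (Function.update (fun h => -Psi p s (1 - h) +
      (Psi p s ((1 + h)⁻¹) - primA p s ((1 + h)⁻¹))) 0 0) (Set.Icc 0 1) := by
  intro x hx
  rcases hx.1.eq_or_lt with rfl | h0
  · rw [continuousWithinAt_update_same]
    refine (tendsto_T_zero hp1 hs0 hs1).mono_left (nhdsWithin_mono _ ?_)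
    rintro y ⟨hy, hy0⟩
    exact lt_of_le_of_ne hy.1 (Ne.symm hy0)
  · refine (ContinuousAt.congr (f := fun h => -Psi p s (1 - h) +
      (Psi p s ((1 + h)⁻¹) - primA p s ((1 + h)⁻¹))) ?_ ?_).continuousWithinAt
    · exact ((hasDerivAt_T1 hp1 hs0 h0).add (hasDerivAt_T2 hp1 hs0 h0)).continuousAt
    · filter_upwards [lt_mem_nhds h0] with y hy
      rw [Function.update_of_ne (ne_of_gt hy)]

lemma hasDerivAt_T (hp1 : 1 < p) (hs0 : 0 < s) {h : ℝ} (h0 : 0 < h) (h1 : h < 1) :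
    HasDerivAt (Function.update (fun h => -Psi p s (1 - h) +
      (Psi p s ((1 + h)⁻¹) - primA p s ((1 + h)⁻¹))) 0 0)
      ((prof p s h + prof p s (-h)) * h ^ (-1 - s * p)) h := by
  have := ((hasDerivAt_T1 hp1 hs0 h0).add (hasDerivAt_T2 hp1 hs0 h0)).congr_of_eventuallyEq
    (f₁ := Function.update (fun h => -Psi p s (1 - h) +
      (Psi p s ((1 + h)⁻¹) - primA p s ((1 + h)⁻¹))) 0 0) ?_
  · refine this.congr_deriv ?_
    rw [prof_neg_of_le hp1 hs0 h0.le h1.le]; ring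
  · filter_upwards [lt_mem_nhds h0] with y hy
    rw [Function.update_of_ne (ne_of_gt hy)]; rfl

lemma integrableOn_profSum_Ioc (hp1 : 1 < p) (hs0 : 0 < s) (hs1 : s < 1) :
    IntegrableOn (fun h => (prof p s h + prof p s (-h)) * h ^ (-1 - s * p)) (Set.Ioc 0 1) :=
  intervalIntegral.integrableOn_deriv_of_nonneg (continuousOn_T hp1 hs0 hs1)
    (fun _ hx => hasDerivAt_T hp1 hs0 hx.1 hx.2) (fun _ hx => profSum_nonneg hp1 hs0 hs1 hx.1 hx.2)

lemma integral_profSum_Ioc (hp1 : 1 < p) (hs0 : 0 < s) (hs1 : s < 1) :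
    ∫ h in Set.Ioc (0 : ℝ) 1, (prof p s h + prof p s (-h)) * h ^ (-1 - s * p) =
      Psi p s ((1 + 1)⁻¹) - primA p s ((1 + 1)⁻¹) := by
  rw [← intervalIntegral.integral_of_le zero_le_one,
    intervalIntegral.integral_eq_sub_of_hasDeriv_right_of_le zero_le_one
      (continuousOn_T hp1 hs0 hs1)
      (fun x hx => (hasDerivAt_T hp1 hs0 hx.1 hx.2).hasDerivWithinAt)
      ((intervalIntegrable_iff_integrableOn_Ioc_of_le zero_le_one).2
        (integrableOn_profSum_Ioc hp1 hs0 hs1))]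
  simp [Psi]

lemma integrableOn_profSum (hp1 : 1 < p) (hs0 : 0 < s) (hs1 : s < 1) :
    IntegrableOn (fun h => (prof p s h + prof p s (-h)) * h ^ (-1 - s * p)) (Set.Ioi 0) := by
  rw [← Set.Ioc_union_Ioi_eq_Ioi (zero_le_one (α := ℝ))]
  refine (integrableOn_profSum_Ioc hp1 hs0 hs1).union ?_
  simp only [add_mul]
  exact (integrableOn_prof_Ioi hp1 hs0).add (integrableOn_prof_neg_Ioi hp1 hs0)

/-- The one-dimensional principal value vanishes: `x₊^s` is `(s,p)`-harmonic on the half-line. -/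
lemma integral_profSum (hp1 : 1 < p) (hs0 : 0 < s) (hs1 : s < 1) :
    ∫ h in Set.Ioi (0 : ℝ), (prof p s h + prof p s (-h)) * h ^ (-1 - s * p) = 0 := by
  have hI := integrableOn_profSum hp1 hs0 hs1
  rw [← Set.Ioc_union_Ioi_eq_Ioi (zero_le_one (α := ℝ))] at hI ⊢
  rw [setIntegral_union (Set.Ioc_disjoint_Ioi le_rfl) measurableSet_Ioi
    (hI.mono_set Set.subset_union_left) (hI.mono_set Set.subset_union_right),
    integral_profSum_Ioc hp1 hs0 hs1]
  simp only [add_mul]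
  rw [integral_add (integrableOn_prof_Ioi hp1 hs0) (integrableOn_prof_neg_Ioi hp1 hs0),
    integral_prof_Ioi hp1 hs0, integral_prof_neg_Ioi hp1 hs0]
  ring

end OneDim

/-! ### Heisenberg geometry and the kernel measure -/

lemma x1_add {n : ℕ} (a b : Heis n) : x1 (a + b) = x1 a + x1 b := by
  unfold x1; split_ifs <;> simp

lemma x1_Hmul_Hinv {n : ℕ} (a b : Heis n) : x1 (Hmul (Hinv a) b) = x1 b - x1 a := by
  unfold x1 Hmul Hinv; split_ifs <;> simp; ring

lemma x1_neg {n : ℕ} (a : Heis n) : x1 (-a) = -x1 a := by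
  unfold x1; split_ifs <;> simp

lemma continuous_x1 {n : ℕ} : Continuous (x1 : Heis n → ℝ) := by
  unfold x1; split_ifs <;> fun_prop

lemma continuous_hd {n : ℕ} : Continuous (hd : Heis n → ℝ) := by
  unfold hd zsq
  exact Continuous.rpow_const (by fun_prop) (fun _ => Or.inr (by norm_num))

lemma zsq_nonneg {n : ℕ} (a : Heis n) : 0 ≤ zsq a := by unfold zsq; positivity

lemma hd_nonneg {n : ℕ} (a : Heis n) : 0 ≤ hd a := by unfold hd; positivity

lemma hd_neg {n : ℕ} (a : Heis n) : hd (-a) = hd a := by simp [hd, zsq]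

lemma hd_pow_four {n : ℕ} (a : Heis n) : hd a ^ 4 = zsq a ^ 2 + a.2.2 ^ 2 := by
  unfold hd
  rw [← Real.rpow_natCast, ← Real.rpow_mul (by positivity)]
  norm_num

lemma zsq_le_hd_sq {n : ℕ} (a : Heis n) : zsq a ≤ hd a ^ 2 := by
  refine (pow_le_pow_iff_left₀ (zsq_nonneg a) (by positivity) two_ne_zero).1 ?_
  have := hd_pow_four a
  nlinarith [sq_nonneg a.2.2]

lemma abs_fst_le_hd {n : ℕ} (a : Heis n) (i : Fin n) : |a.1 i| ≤ hd a := by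
  refine abs_le_of_sq_le_sq ?_ (hd_nonneg a)
  refine le_trans ?_ (zsq_le_hd_sq a)
  unfold zsq
  have := Finset.single_le_sum (f := fun i => a.1 i ^ 2) (fun _ _ => sq_nonneg _) (Finset.mem_univ i)
  have : 0 ≤ ∑ i, a.2.1 i ^ 2 := by positivity
  linarith

lemma abs_snd_le_hd {n : ℕ} (a : Heis n) (i : Fin n) : |a.2.1 i| ≤ hd a := by
  refine abs_le_of_sq_le_sq ?_ (hd_nonneg a)
  refine le_trans ?_ (zsq_le_hd_sq a)
  unfold zsq
  have := Finset.single_le_sum (f := fun i => a.2.1 i ^ 2) (fun _ _ => sq_nonneg _)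
    (Finset.mem_univ i)
  have : 0 ≤ ∑ i, a.1 i ^ 2 := by positivity
  linarith

lemma abs_t_le_hd_sq {n : ℕ} (a : Heis n) : |a.2.2| ≤ hd a ^ 2 := by
  refine abs_le_of_sq_le_sq ?_ (by positivity)
  have := hd_pow_four a
  nlinarith [sq_nonneg (zsq a)]

lemma abs_x1_le_hd {n : ℕ} (a : Heis n) : |x1 a| ≤ hd a := by
  unfold x1
  split_ifs
  · exact abs_fst_le_hd a _
  · simpa using hd_nonneg a

/-- The Heisenberg dilation `δ_l(x,y,t) = (l x, l y, l² t)`. -/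
def dil {n : ℕ} (l : ℝ) (a : Heis n) : Heis n := (l • a.1, l • a.2.1, (l ^ 2) • a.2.2)

lemma continuous_dil {n : ℕ} (l : ℝ) : Continuous (dil l : Heis n → Heis n) := by
  unfold dil; fun_prop

lemma dil_injective {n : ℕ} {l : ℝ} (hl : 0 < l) : Function.Injective (dil l : Heis n → Heis n) := by
  intro a b h
  simp only [dil, Prod.mk.injEq] at h
  exact Prod.ext (smul_right_injective _ hl.ne' h.1)
    (Prod.ext (smul_right_injective _ hl.ne' h.2.1)
      (smul_right_injective _ (pow_pos hl 2).ne' h.2.2))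

lemma x1_dil {n : ℕ} (l : ℝ) (a : Heis n) : x1 (dil l a) = l * x1 a := by
  unfold x1 dil; split_ifs <;> simp

lemma hd_dil {n : ℕ} {l : ℝ} (hl : 0 < l) (a : Heis n) : hd (dil l a) = l * hd a := by
  have hz : zsq (dil l a) = l ^ 2 * zsq a := by
    simp [zsq, dil, mul_pow, Finset.mul_sum, mul_add]
  have ht : (dil l a).2.2 = l ^ 2 * a.2.2 := rfl
  refine (pow_left_inj₀ (hd_nonneg _) (mul_nonneg hl.le (hd_nonneg a)) four_ne_zero).1 ?_
  rw [mul_pow, hd_pow_four, hd_pow_four, hz, ht]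
  ring

/-- Dilations scale Lebesgue measure by `l^Q`. -/
lemma map_dil_volume {n : ℕ} {l : ℝ} (hl : 0 < l) :
    Measure.map (dil l) (volume : Measure (Heis n)) =
      ENNReal.ofReal (l ^ (-hQ n)) • volume := by
  have hl2 : (l ^ 2) ≠ 0 := (pow_pos hl 2).ne'
  have e : (dil l : Heis n → Heis n) =
      Prod.map (fun x => l • x) (Prod.map (fun x => l • x) (fun t : ℝ => (l ^ 2) • t)) := by
    ext1 a; rfl
  rw [e, Measure.volume_eq_prod, ← Measure.map_prod_map _ _ (by fun_prop) (by fun_prop),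
    Measure.volume_eq_prod, ← Measure.map_prod_map _ _ (by fun_prop) (by fun_prop),
    Measure.map_addHaar_smul _ hl.ne', Measure.map_addHaar_smul _ hl2,
    Measure.prod_smul_left, Measure.prod_smul_right, Measure.prod_smul_left,
    Measure.prod_smul_right, Measure.prod_smul_right, smul_smul, smul_smul]
  congr 1
  rw [← ENNReal.ofReal_mul (by positivity), ← ENNReal.ofReal_mul (by positivity)]
  congr 1
  rw [abs_of_pos (by positivity), abs_of_pos (by positivity), hQ, Real.rpow_neg hl.le]
  simp only [Module.finrank_fintype_fun_eq_card, Fintype.card_fin, Module.finrank_self]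
  rw [show (2 * (n : ℝ) + 2) = ((2 * n + 2 : ℕ) : ℝ) by push_cast; ring, Real.rpow_natCast,
    ← mul_inv, ← mul_inv]
  congr 1
  ring

/-- Left translations of the group preserve Lebesgue measure, being iterated shears. -/
lemma measurePreserving_Hmul {n : ℕ} (a : Heis n) :
    MeasurePreserving (Hmul a) (volume : Measure (Heis n)) volume := by
  have key := MeasurePreserving.skew_product (μa := (volume : Measure (Fin n → ℝ)))
    (μb := volume) (μc := (volume : Measure ((Fin n → ℝ) × ℝ))) (μd := volume)
    (f := fun x => a.1 + x)
    (g := fun x q => (a.2.1 + q.1,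
      a.2.2 + q.2 + 2 * (∑ i, a.2.1 i * x i) - 2 * (∑ i, a.1 i * q.1 i)))
    (measurePreserving_add_left _ _) (by unfold Function.uncurry; fun_prop) ?_
  · exact key
  · refine Eventually.of_forall fun x => ?_
    have := MeasurePreserving.skew_product (μa := (volume : Measure (Fin n → ℝ)))
      (μb := volume) (μc := (volume : Measure ℝ)) (μd := volume)
      (f := fun y => a.2.1 + y)
      (g := fun y t => a.2.2 + t + 2 * (∑ i, a.2.1 i * x i) - 2 * (∑ i, a.1 i * y i))
      (measurePreserving_add_left _ _) (by unfold Function.uncurry; fun_prop) ?_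
    · exact this.map_eq
    · refine Eventually.of_forall fun y => ?_
      have e : (fun t : ℝ => a.2.2 + t + 2 * (∑ i, a.2.1 i * x i) - 2 * (∑ i, a.1 i * y i)) =
          fun t => (a.2.2 + 2 * (∑ i, a.2.1 i * x i) - 2 * (∑ i, a.1 i * y i)) + t := by
        ext t; ring
      rw [e]
      exact (measurePreserving_add_left _ _).map_eq

lemma measurableEmbedding_Hmul {n : ℕ} (a : Heis n) : MeasurableEmbedding (Hmul a) := by
  apply Continuous.measurableEmbedding
  · unfold Hmul; fun_prop
  · intro b c h
    simp only [Hmul, Prod.mk.injEq] at h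
    obtain ⟨h1, h2, h3⟩ := h
    replace h1 := add_left_cancel h1
    replace h2 := add_left_cancel h2
    rw [h1, h2] at h3
    exact Prod.ext h1 (Prod.ext h2 (by linarith))

/-- Density of the kernel measure, `d(η)^{-(Q+sp)}`. -/
def kerD (n : ℕ) (p s : ℝ) (a : Heis n) : ℝ := (hd a ^ (hQ n + s * p))⁻¹

/-- The kernel measure `ν = d(η)^{-(Q+sp)} dη`. -/
def nu (n : ℕ) (p s : ℝ) : Measure (Heis n) :=
  volume.withDensity (fun a => ENNReal.ofReal (kerD n p s a))

lemma measurable_kerD (n : ℕ) (p s : ℝ) : Measurable (kerD n p s) := by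
  unfold kerD
  exact (continuous_hd.measurable.pow_const _).inv

lemma kerD_nonneg (n : ℕ) (p s : ℝ) (a : Heis n) : 0 ≤ kerD n p s a :=
  inv_nonneg.2 (Real.rpow_nonneg (hd_nonneg a) _)

lemma setIntegral_nu (n : ℕ) (p s : ℝ) {S : Set (Heis n)} (hS : MeasurableSet S) (g : Heis n → ℝ) :
    ∫ a in S, g a ∂(nu n p s) = ∫ a in S, g a / hd a ^ (hQ n + s * p) := by
  unfold nu
  rw [setIntegral_withDensity_eq_setIntegral_toReal_smul
    (measurable_kerD n p s).ennreal_ofReal (by simp) _ hS]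
  congr 1
  ext a
  rw [ENNReal.toReal_ofReal (kerD_nonneg n p s a), kerD, smul_eq_mul, div_eq_mul_inv, mul_comm]

lemma map_neg_nu (n : ℕ) (p s : ℝ) : Measure.map (fun a => -a) (nu n p s) = nu n p s := by
  have hv : Measure.map (fun a : Heis n => -a) volume = volume := by
    have e : (fun a : Heis n => -a) = Prod.map (fun x => -x) (Prod.map (fun x => -x)
      (fun t : ℝ => -t)) := by ext1 a; rfl
    rw [e, Measure.volume_eq_prod, ← Measure.map_prod_map _ _ (by fun_prop) (by fun_prop),
      Measure.volume_eq_prod, ← Measure.map_prod_map _ _ (by fun_prop) (by fun_prop)]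
    have h1 := (Measure.measurePreserving_neg (volume : Measure (Fin n → ℝ))).map_eq
    have h2 := (Measure.measurePreserving_neg (volume : Measure ℝ)).map_eq
    rw [show (fun x : Fin n → ℝ => -x) = Neg.neg from rfl, h1,
      show (fun x : ℝ => -x) = Neg.neg from rfl, h2]
  ext S hS
  have hm : Measurable (fun a : Heis n => -a) := by fun_prop
  rw [Measure.map_apply hm hS, nu, withDensity_apply _ (hm hS), withDensity_apply _ hS]
  conv_rhs => rw [← hv]
  rw [setLIntegral_map hS (measurable_kerD n p s).ennreal_ofReal hm]
  simp only [kerD, hd_neg]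

/-- Homogeneity of the kernel measure: `ν(δ_l⁻¹ S) = l^{sp} ν(S)`. -/
lemma nu_preimage_dil (n : ℕ) (p s : ℝ) {l : ℝ} (hl : 0 < l) {S : Set (Heis n)}
    (hS : MeasurableSet S) :
    nu n p s (dil l ⁻¹' S) = ENNReal.ofReal (l ^ (s * p)) * nu n p s S := by
  have hm : Measurable (dil l : Heis n → Heis n) := (continuous_dil l).measurable
  have hk : ∀ a : Heis n, ENNReal.ofReal (kerD n p s a) =
      ENNReal.ofReal (l ^ (hQ n + s * p)) * ENNReal.ofReal (kerD n p s (dil l a)) := by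
    intro a
    rw [← ENNReal.ofReal_mul (by positivity), kerD, kerD, hd_dil hl,
      Real.mul_rpow hl.le (hd_nonneg a), mul_inv, mul_inv_cancel_left₀ (by positivity)]
  have hmk := (measurable_kerD n p s).ennreal_ofReal
  rw [nu, withDensity_apply _ (hm hS), withDensity_apply _ hS]
  have hmap := setLIntegral_map (μ := (volume : Measure (Heis n))) hS hmk hm
  have hmk' : Measurable (fun a => ENNReal.ofReal (kerD n p s (dil l a))) := hmk.comp hm
  rw [setLIntegral_congr_fun (hm hS) (fun a _ => hk a), lintegral_const_mul _ hmk', ← hmap,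
    map_dil_volume hl,
    Measure.restrict_smul, lintegral_smul_measure, smul_eq_mul, ← mul_assoc,
    ← ENNReal.ofReal_mul (by positivity), ← Real.rpow_add hl]
  congr 3
  ring

lemma map_dil_nu (n : ℕ) (p s : ℝ) {l : ℝ} (hl : 0 < l) :
    Measure.map (dil l) (nu n p s) = ENNReal.ofReal (l ^ (s * p)) • nu n p s := by
  ext S hS
  rw [Measure.map_apply (continuous_dil l).measurable hS, nu_preimage_dil n p s hl hS]
  rfl

lemma measurableSet_le_hd {n : ℕ} (r : ℝ) : MeasurableSet {a : Heis n | r ≤ hd a} :=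
  measurableSet_le measurable_const continuous_hd.measurable

lemma volume_hd_lt_two (n : ℕ) : volume {a : Heis n | hd a < 2} < ∞ := by
  refine (measure_mono ?_).trans_lt
    (isCompact_closedBall (0 : Heis n) 4).measure_lt_top
  intro a (ha : hd a < 2)
  rw [mem_closedBall_zero_iff]
  have h0 := hd_nonneg a
  refine max_le ((pi_norm_le_iff_of_nonneg (by norm_num)).2 fun i => ?_)
    (max_le ((pi_norm_le_iff_of_nonneg (by norm_num)).2 fun i => ?_) ?_)
  · have := abs_fst_le_hd a i; rw [Real.norm_eq_abs]; linarith
  · have := abs_snd_le_hd a i; rw [Real.norm_eq_abs]; linarith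
  · have := abs_t_le_hd_sq a; rw [Real.norm_eq_abs]; nlinarith

lemma nu_shell_lt_top {n : ℕ} {p s : ℝ} (hp1 : 1 < p) (hs0 : 0 < s) :
    nu n p s {a : Heis n | 1 ≤ hd a ∧ hd a < 2} < ∞ := by
  have hS : MeasurableSet {a : Heis n | 1 ≤ hd a ∧ hd a < 2} :=
    (measurableSet_le_hd 1).inter (measurableSet_lt continuous_hd.measurable measurable_const)
  have hpos : 0 ≤ hQ n + s * p := by unfold hQ; positivity
  rw [nu, withDensity_apply _ hS]
  refine lt_of_le_of_lt (setLIntegral_mono (g := fun _ => 1) measurable_const fun a ha => ?_) ?_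
  · rw [ENNReal.ofReal_le_one, kerD]
    exact inv_le_one_of_one_le₀ (Real.one_le_rpow ha.1 hpos)
  · rw [setLIntegral_const, one_mul]
    exact (measure_mono fun a ha => ha.2).trans_lt (volume_hd_lt_two n)

/-- The kernel measure of `{d ≥ 1}` is a geometric series over dyadic shells. -/
lemma nu_one_le_hd_lt_top {n : ℕ} {p s : ℝ} (hp1 : 1 < p) (hs0 : 0 < s) :
    nu n p s {a : Heis n | 1 ≤ hd a} < ∞ := by
  have hsp : 0 < s * p := by positivity
  have hS : MeasurableSet {a : Heis n | 1 ≤ hd a ∧ hd a < 2} :=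
    (measurableSet_le_hd 1).inter (measurableSet_lt continuous_hd.measurable measurable_const)
  set q : ℝ := ((2 : ℝ)⁻¹) ^ (s * p) with hq
  have hq1 : q < 1 := Real.rpow_lt_one (by norm_num) (by norm_num) hsp
  have hq0 : 0 ≤ q := by positivity
  have hcov : {a : Heis n | 1 ≤ hd a} ⊆
      ⋃ k : ℕ, dil (((2 : ℝ)⁻¹) ^ k) ⁻¹' {a : Heis n | 1 ≤ hd a ∧ hd a < 2} := by
    intro a ha
    obtain ⟨k, h1, h2⟩ := exists_nat_pow_near (show 1 ≤ hd a from ha) one_lt_two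
    refine Set.mem_iUnion.2 ⟨k, ?_⟩
    simp only [Set.mem_preimage, Set.mem_ofPred_eq]
    rw [hd_dil (by positivity), inv_pow, le_inv_mul_iff₀ (by positivity),
      inv_mul_lt_iff₀ (by positivity)]
    exact ⟨by linarith, by rw [pow_succ] at h2; linarith⟩
  refine (measure_mono hcov).trans_lt ((measure_iUnion_le _).trans_lt ?_)
  have hk : ∀ k : ℕ, nu n p s (dil (((2 : ℝ)⁻¹) ^ k) ⁻¹' {a : Heis n | 1 ≤ hd a ∧ hd a < 2}) =
      ENNReal.ofReal q ^ k * nu n p s {a : Heis n | 1 ≤ hd a ∧ hd a < 2} := by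
    intro k
    rw [nu_preimage_dil n p s (by positivity) hS, ← ENNReal.ofReal_pow hq0, hq,
      ← Real.rpow_natCast, ← Real.rpow_natCast, ← Real.rpow_mul (by norm_num),
      ← Real.rpow_mul (by norm_num), mul_comm (k : ℝ)]
  simp_rw [hk]
  rw [ENNReal.tsum_mul_right, ENNReal.tsum_geometric]
  refine ENNReal.mul_lt_top ?_ (nu_shell_lt_top hp1 hs0)
  rw [ENNReal.inv_lt_top, tsub_pos_iff_lt]
  exact ENNReal.ofReal_lt_one.2 hq1

lemma nu_le_hd_lt_top {n : ℕ} {p s r : ℝ} (hp1 : 1 < p) (hs0 : 0 < s) (hr : 0 < r) :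
    nu n p s {a : Heis n | r ≤ hd a} < ∞ := by
  have e : {a : Heis n | r ≤ hd a} = dil r⁻¹ ⁻¹' {a : Heis n | 1 ≤ hd a} := by
    ext a
    simp only [Set.mem_preimage, Set.mem_ofPred_eq]
    rw [hd_dil (by positivity), le_inv_mul_iff₀ hr, mul_one]
  rw [e, nu_preimage_dil n p s (by positivity) (measurableSet_le_hd 1)]
  exact ENNReal.mul_lt_top ENNReal.ofReal_lt_top (nu_one_le_hd_lt_top hp1 hs0)

/-! ### The first-coordinate marginal of the kernel measure and the limit -/

/-- The one-dimensional weight `h^{-1-sp} dh`. -/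
def kap (p s : ℝ) : Measure ℝ :=
  volume.withDensity (fun h => ENNReal.ofReal (h ^ (-1 - s * p)))

/-- The proportionality constant between the `x₁`-marginal of `ν` and `h^{-1-sp} dh`. -/
def margC (n : ℕ) (p s : ℝ) : ℝ≥0∞ :=
  ENNReal.ofReal (s * p) * nu n p s {a : Heis n | 1 ≤ x1 a}

lemma nu_one_le_x1_lt_top {n : ℕ} {p s : ℝ} (hp1 : 1 < p) (hs0 : 0 < s) :
    nu n p s {a : Heis n | 1 ≤ x1 a} < ∞ :=
  (measure_mono fun a (ha : 1 ≤ x1 a) => show 1 ≤ hd a from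
    ha.trans ((le_abs_self _).trans (abs_x1_le_hd a))).trans_lt (nu_one_le_hd_lt_top hp1 hs0)

lemma margC_lt_top {n : ℕ} {p s : ℝ} (hp1 : 1 < p) (hs0 : 0 < s) : margC n p s < ∞ :=
  ENNReal.mul_lt_top ENNReal.ofReal_lt_top (nu_one_le_x1_lt_top hp1 hs0)

lemma kap_Ici {p s a : ℝ} (hp1 : 1 < p) (hs0 : 0 < s) (ha : 0 < a) :
    kap p s (Set.Ici a) = ENNReal.ofReal (a ^ (-(s * p)) / (s * p)) := by
  have hsp : 0 < s * p := by positivity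
  rw [kap, withDensity_apply _ measurableSet_Ici, setLIntegral_congr Ioi_ae_eq_Ici.symm,
    ← ofReal_integral_eq_lintegral_ofReal (integrableOn_Ioi_rpow_of_lt (by linarith) ha),
    integral_Ioi_rpow_of_lt (by linarith) ha, show -1 - s * p + 1 = -(s * p) by ring,
    neg_div_neg_eq]
  filter_upwards [ae_restrict_mem measurableSet_Ioi] with x hx
  exact Real.rpow_nonneg (ha.trans hx).le _

lemma map_x1_nu_Ici {n : ℕ} {p s a : ℝ} (hp1 : 1 < p) (hs0 : 0 < s) (ha : 0 < a) :
    Measure.map x1 (nu n p s) (Set.Ici a) = margC n p s * kap p s (Set.Ici a) := by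
  have hsp : 0 < s * p := by positivity
  have hS : MeasurableSet {b : Heis n | 1 ≤ x1 b} :=
    measurableSet_le measurable_const continuous_x1.measurable
  have e : (x1 : Heis n → ℝ) ⁻¹' (Set.Ici a) = dil a⁻¹ ⁻¹' {b : Heis n | 1 ≤ x1 b} := by
    ext b
    simp only [Set.mem_preimage, Set.mem_ofPred_eq, Set.mem_Ici]
    rw [x1_dil, le_inv_mul_iff₀ ha, mul_one]
  rw [Measure.map_apply continuous_x1.measurable measurableSet_Ici, e,
    nu_preimage_dil n p s (by positivity) hS, kap_Ici hp1 hs0 ha, margC, mul_right_comm,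
    ← ENNReal.ofReal_mul hsp.le, mul_div_cancel₀ _ hsp.ne', Real.inv_rpow ha.le,
    Real.rpow_neg ha.le]

/-- On `(0,∞)` the `x₁`-marginal of the kernel measure is a multiple of `h^{-1-sp} dh`: both are
homogeneous of degree `-sp`. -/
lemma map_x1_nu_restrict {n : ℕ} {p s : ℝ} (hp1 : 1 < p) (hs0 : 0 < s) :
    (Measure.map x1 (nu n p s)).restrict (Set.Ioi 0) =
      (margC n p s • kap p s).restrict (Set.Ioi 0) := by
  have hU : Set.Ioi (0 : ℝ) = ⋃ k : ℕ, Set.Ici (1 / ((k : ℝ) + 1)) := by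
    ext x
    simp only [Set.mem_Ioi, Set.mem_iUnion, Set.mem_Ici]
    constructor
    · intro hx
      obtain ⟨k, hk⟩ := exists_nat_one_div_lt hx
      exact ⟨k, hk.le⟩
    · rintro ⟨k, hk⟩
      exact lt_of_lt_of_le (by positivity) hk
  rw [hU, Measure.restrict_iUnion_congr]
  intro k
  have hb : 0 < 1 / ((k : ℝ) + 1) := by positivity
  have hfin : IsFiniteMeasure
      ((Measure.map x1 (nu n p s)).restrict (Set.Ici (1 / ((k : ℝ) + 1)))) := by
    constructor
    rw [Measure.restrict_apply_univ, map_x1_nu_Ici hp1 hs0 hb, kap_Ici hp1 hs0 hb]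
    exact ENNReal.mul_lt_top (margC_lt_top hp1 hs0) ENNReal.ofReal_lt_top
  refine Measure.ext_of_Ici _ _ fun a => ?_
  rw [Measure.restrict_apply measurableSet_Ici, Measure.restrict_apply measurableSet_Ici,
    Set.Ici_inter_Ici, map_x1_nu_Ici hp1 hs0 (lt_of_lt_of_le hb le_sup_right)]
  rfl

lemma map_x1_nu_restrict_of_subset {n : ℕ} {p s : ℝ} (hp1 : 1 < p) (hs0 : 0 < s) {T : Set ℝ}
    (hTm : MeasurableSet T) (hT : T ⊆ Set.Ioi 0) :
    Measure.map x1 ((nu n p s).restrict (x1 ⁻¹' T)) =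
      margC n p s • (volume.restrict T).withDensity
        (fun h => ENNReal.ofReal (h ^ (-1 - s * p))) := by
  have := congrArg (fun m => Measure.restrict m T) (map_x1_nu_restrict (n := n) hp1 hs0)
  simp only [Measure.restrict_restrict_of_subset hT] at this
  rw [← Measure.restrict_map continuous_x1.measurable hTm, this, Measure.restrict_smul, kap,
    restrict_withDensity hTm]

lemma integrableOn_nu_comp_x1 {n : ℕ} {p s : ℝ} (hp1 : 1 < p) (hs0 : 0 < s) {T : Set ℝ}
    (hTm : MeasurableSet T) (hT : T ⊆ Set.Ioi 0) {g : ℝ → ℝ} (hg : Measurable g)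
    (hi : IntegrableOn (fun h => g h * h ^ (-1 - s * p)) T) :
    IntegrableOn (fun a => g (x1 a)) (x1 ⁻¹' T) (nu n p s) := by
  have hw : Measurable (fun h : ℝ => ENNReal.ofReal (h ^ (-1 - s * p))) :=
    (measurable_id.pow_const _).ennreal_ofReal
  have : Integrable g (Measure.map x1 ((nu n p s).restrict (x1 ⁻¹' T))) := by
    rw [map_x1_nu_restrict_of_subset hp1 hs0 hTm hT]
    refine Integrable.smul_measure ?_ (margC_lt_top hp1 hs0).ne
    rw [integrable_withDensity_iff_integrable_smul' hw (by simp)]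
    refine IntegrableOn.congr_fun hi (fun x hx => ?_) hTm
    have h0 : 0 < x := hT hx
    rw [ENNReal.toReal_ofReal (by positivity), smul_eq_mul, mul_comm]
  exact (integrable_map_measure hg.aestronglyMeasurable continuous_x1.measurable.aemeasurable).1
    this

lemma integral_nu_comp_x1 {n : ℕ} {p s : ℝ} (hp1 : 1 < p) (hs0 : 0 < s) {T : Set ℝ}
    (hTm : MeasurableSet T) (hT : T ⊆ Set.Ioi 0) {g : ℝ → ℝ} (hg : Measurable g) :
    ∫ a in x1 ⁻¹' T, g (x1 a) ∂(nu n p s) =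
      (margC n p s).toReal * ∫ h in T, g h * h ^ (-1 - s * p) := by
  have hw : Measurable (fun h : ℝ => ENNReal.ofReal (h ^ (-1 - s * p))) :=
    (measurable_id.pow_const _).ennreal_ofReal
  rw [← integral_map (μ := (nu n p s).restrict (x1 ⁻¹' T))
    continuous_x1.measurable.aemeasurable hg.aestronglyMeasurable,
    map_x1_nu_restrict_of_subset hp1 hs0 hTm hT, integral_smul_measure,
    integral_withDensity_eq_integral_toReal_smul hw (by simp), smul_eq_mul]
  congr 1
  refine setIntegral_congr_fun hTm fun x hx => ?_
  have h0 : 0 < x := hT hx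
  rw [ENNReal.toReal_ofReal (by positivity), smul_eq_mul, mul_comm]

lemma measurable_prof (p s : ℝ) : Measurable (prof p s) := by
  unfold prof Jp
  have h1 : Measurable (fun h : ℝ => 1 - (max (1 + h) 0) ^ s) :=
    measurable_const.sub (((measurable_const.add measurable_id).max measurable_const).pow_const _)
  exact (h1.abs.pow_const _).mul h1

lemma prof_zero (p s : ℝ) : prof p s 0 = 0 := by simp [prof, Jp]

lemma abs_prof_le_one {p s : ℝ} (hp1 : 1 < p) (hs0 : 0 < s) (hs1 : s < 1) {h : ℝ} (h0 : 0 ≤ h)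
    (h1 : h ≤ 1) : |prof p s h| ≤ 1 := by
  rw [prof_of_nonneg hp1 hs0 h0, abs_neg]
  have a0 := Real.one_le_rpow (by linarith : 1 ≤ 1 + h) hs0.le
  have a1 := rpow_one_add_le_one_add_mul_self (by linarith : -1 ≤ h) hs0.le hs1.le
  have a2 : s * h ≤ 1 := by nlinarith
  rw [abs_of_nonneg (Real.rpow_nonneg (by linarith) _)]
  exact Real.rpow_le_one (by linarith) (by linarith) (by linarith)

lemma abs_prof_neg_le_one {p s : ℝ} (hp1 : 1 < p) (hs0 : 0 < s) {h : ℝ} (h0 : 0 ≤ h)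
    (h1 : h ≤ 1) : |prof p s (-h)| ≤ 1 := by
  rw [prof_neg_of_le hp1 hs0 h0 h1]
  have a0 := Real.rpow_le_one (by linarith : 0 ≤ 1 - h) (by linarith) hs0.le
  have a1 := Real.rpow_nonneg (by linarith : 0 ≤ 1 - h) s
  rw [abs_of_nonneg (Real.rpow_nonneg (by linarith) _)]
  exact Real.rpow_le_one (by linarith) (by linarith) (by linarith)

/-- A function of `x₁`, bounded on `(0,1]` and integrable at infinity against the marginal weight,
is `ν`-integrable away from the origin. -/
lemma integrableOn_nu_away {n : ℕ} {p s r : ℝ} (hp1 : 1 < p) (hs0 : 0 < s) (hr : 0 < r)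
    {g : ℝ → ℝ} (hg : Measurable g) (hb : ∀ h, 0 ≤ h → h ≤ 1 → |g h| ≤ 1)
    (hi : IntegrableOn (fun h => g h * h ^ (-1 - s * p)) (Set.Ioi 1)) :
    IntegrableOn (fun a => g (x1 a)) ({a : Heis n | r ≤ hd a} ∩ {a | 0 < x1 a}) (nu n p s) := by
  have h1 := integrableOn_nu_comp_x1 (n := n) hp1 hs0 measurableSet_Ioi
    (Set.Ioi_subset_Ioi zero_le_one) hg hi
  have h2 : IntegrableOn (fun a => g (x1 a))
      ({a : Heis n | r ≤ hd a} ∩ x1 ⁻¹' Set.Ioc 0 1) (nu n p s) := by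
    refine Measure.integrableOn_of_bounded (M := 1)
      ((measure_mono Set.inter_subset_left).trans_lt (nu_le_hd_lt_top hp1 hs0 hr)).ne
      (hg.comp continuous_x1.measurable).aestronglyMeasurable ?_
    filter_upwards [ae_restrict_mem ((measurableSet_le_hd r).inter
      (continuous_x1.measurable measurableSet_Ioc))] with a ha
    exact hb _ ha.2.1.le ha.2.2
  refine (h1.union h2).mono_set ?_
  rintro a ⟨ha, ha0⟩
  rcases lt_or_ge 1 (x1 a) with h | h
  · exact Or.inl h
  · exact Or.inr ⟨ha, ha0, h⟩

/-- The normalized truncated integral at height `x₁ = 1`. -/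
def gModel (n : ℕ) (p s r : ℝ) : ℝ := ∫ a in {a : Heis n | r ≤ hd a}, prof p s (x1 a) ∂(nu n p s)

/-- Folding `{x₁ < 0}` onto `{x₁ > 0}` by the measure-preserving inversion `η ↦ -η`. -/
lemma gModel_eq {n : ℕ} {p s r : ℝ} (hp1 : 1 < p) (hs0 : 0 < s) (hs1 : s < 1) (hr : 0 < r) :
    gModel n p s r = ∫ a in {a : Heis n | r ≤ hd a} ∩ {a | 0 < x1 a},
      (prof p s (x1 a) + prof p s (-x1 a)) ∂(nu n p s) := by
  have hE := measurableSet_le_hd (n := n) r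
  have hP : MeasurableSet {a : Heis n | 0 < x1 a} :=
    measurableSet_lt measurable_const continuous_x1.measurable
  have hN : MeasurableSet {a : Heis n | x1 a < 0} :=
    measurableSet_lt continuous_x1.measurable measurable_const
  have hm : MeasurePreserving (fun a : Heis n => -a) (nu n p s) (nu n p s) :=
    ⟨by fun_prop, map_neg_nu n p s⟩
  have hme : MeasurableEmbedding (fun a : Heis n => -a) :=
    Continuous.measurableEmbedding (by fun_prop) neg_injective
  have i1 : IntegrableOn (fun a => prof p s (x1 a)) ({a : Heis n | r ≤ hd a} ∩ {a | 0 < x1 a})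
      (nu n p s) := integrableOn_nu_away hp1 hs0 hr (measurable_prof p s)
        (fun h h0 h1 => abs_prof_le_one hp1 hs0 hs1 h0 h1) (integrableOn_prof_Ioi hp1 hs0)
  have i2 : IntegrableOn (fun a => prof p s (-x1 a)) ({a : Heis n | r ≤ hd a} ∩ {a | 0 < x1 a})
      (nu n p s) := integrableOn_nu_away (g := fun h => prof p s (-h)) hp1 hs0 hr
        ((measurable_prof p s).comp measurable_neg)
        (fun h h0 h1 => abs_prof_neg_le_one hp1 hs0 h0 h1) (integrableOn_prof_neg_Ioi hp1 hs0)
  have hpre : (fun a : Heis n => -a) ⁻¹' ({a : Heis n | r ≤ hd a} ∩ {a | x1 a < 0}) =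
      {a : Heis n | r ≤ hd a} ∩ {a | 0 < x1 a} := by
    ext a
    simp only [Set.mem_preimage, Set.mem_inter_iff, Set.mem_ofPred_eq, hd_neg, x1_neg,
      Left.neg_neg_iff]
  have i3 : IntegrableOn (fun a => prof p s (x1 a)) ({a : Heis n | r ≤ hd a} ∩ {a | x1 a < 0})
      (nu n p s) := by
    rw [← hm.integrableOn_comp_preimage hme, hpre]
    simpa only [Function.comp_def, x1_neg] using i2
  have e3 : ∫ a in {a : Heis n | r ≤ hd a} ∩ {a | x1 a < 0}, prof p s (x1 a) ∂(nu n p s) =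
      ∫ a in {a : Heis n | r ≤ hd a} ∩ {a | 0 < x1 a}, prof p s (-x1 a) ∂(nu n p s) := by
    rw [← hm.setIntegral_preimage_emb hme, hpre]
    simp only [x1_neg]
  rw [integral_add i1 i2, ← e3, ← setIntegral_union _ (hE.inter hN) i1 i3, gModel]
  · refine (setIntegral_eq_of_subset_of_forall_sdiff_eq_zero hE ?_ ?_)
    · exact Set.union_subset Set.inter_subset_left Set.inter_subset_left
    · rintro a ⟨ha, hna⟩
      have : x1 a = 0 := by
        by_contra hne
        rcases lt_or_gt_of_ne hne with h | h
        · exact hna (Or.inr ⟨ha, h⟩)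
        · exact hna (Or.inl ⟨ha, h⟩)
      rw [this, prof_zero]
  · rw [Set.disjoint_left]
    rintro a ⟨_, h1⟩ ⟨_, h2⟩
    have h1' : 0 < x1 a := h1
    have h2' : x1 a < 0 := h2
    exact lt_asymm h1' h2'

lemma tendsto_gModel {n : ℕ} {p s : ℝ} (hp1 : 1 < p) (hs0 : 0 < s) (hs1 : s < 1) :
    Tendsto (gModel n p s) (𝓝[>] 0) (𝓝 0) := by
  have hmF : Measurable (fun h => prof p s h + prof p s (-h)) :=
    (measurable_prof p s).add ((measurable_prof p s).comp measurable_neg)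
  have hP : MeasurableSet {a : Heis n | 0 < x1 a} :=
    measurableSet_lt measurable_const continuous_x1.measurable
  set F : Heis n → ℝ := fun a => prof p s (x1 a) + prof p s (-x1 a) with hF
  have hmF' : Measurable F := hmF.comp continuous_x1.measurable
  have hint : IntegrableOn F {a : Heis n | 0 < x1 a} (nu n p s) :=
    integrableOn_nu_comp_x1 (n := n) hp1 hs0 measurableSet_Ioi subset_rfl hmF
      (integrableOn_profSum hp1 hs0 hs1)
  have hzero : ∫ a in {a : Heis n | 0 < x1 a}, F a ∂(nu n p s) = 0 := by
    have := integral_nu_comp_x1 (n := n) hp1 hs0 measurableSet_Ioi subset_rfl hmF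
    rw [integral_profSum hp1 hs0 hs1, mul_zero] at this
    exact this
  have hdct : Tendsto (fun r => ∫ a in {a : Heis n | 0 < x1 a},
      Set.indicator {a : Heis n | r ≤ hd a} F a ∂(nu n p s)) (𝓝[>] 0)
      (𝓝 (∫ a in {a : Heis n | 0 < x1 a}, F a ∂(nu n p s))) := by
    refine tendsto_integral_filter_of_dominated_convergence (fun a => ‖F a‖) ?_ ?_ hint.norm ?_
    · exact Eventually.of_forall fun r =>
        (hmF'.indicator (measurableSet_le_hd r)).aestronglyMeasurable
    · exact Eventually.of_forall fun r => Eventually.of_forall fun a => norm_indicator_le_norm_self _ _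
    · filter_upwards [ae_restrict_mem hP] with a ha
      have hda : 0 < hd a := lt_of_lt_of_le ha ((le_abs_self _).trans (abs_x1_le_hd a))
      refine tendsto_const_nhds.congr' ?_
      filter_upwards [Ioo_mem_nhdsGT hda] with r hr
      rw [Set.indicator_of_mem]
      exact hr.2.le
  rw [hzero] at hdct
  refine hdct.congr' ?_
  filter_upwards [self_mem_nhdsWithin] with r hr
  rw [gModel_eq hp1 hs0 hs1 hr, setIntegral_indicator (measurableSet_le_hd r), Set.inter_comm]

lemma Jp_mul {p c t : ℝ} (hc : 0 < c) : Jp p (c * t) = c ^ (p - 1) * Jp p t := by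
  unfold Jp
  rw [abs_mul, abs_of_pos hc, Real.mul_rpow hc.le (abs_nonneg t),
    show p - 1 = (p - 2) + 1 by ring, Real.rpow_add_one hc.ne']
  ring

/-- By left-invariance and homogeneity, `g_ε(ξ) = x₁^{-s} G(ε/x₁)`. -/
lemma gHeis_eq {n : ℕ} {p s ε : ℝ} {ξ : Heis n} (hξ : 0 < x1 ξ) :
    gHeis n p s ε ξ = x1 ξ ^ (-s) * gModel n p s (ε / x1 ξ) := by
  set a := x1 ξ with ha
  have hE := measurableSet_le_hd (n := n) ε
  set f : Heis n → ℝ := fun η => Jp p (a ^ s - (max (a + x1 η) 0) ^ s) with hf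
  have hfm : Measurable f := by
    have h1 : Measurable (fun η : Heis n => a ^ s - (max (a + x1 η) 0) ^ s) :=
      measurable_const.sub (((measurable_const.add continuous_x1.measurable).max
        measurable_const).pow_const _)
    exact (h1.abs.pow_const _).mul h1
  have s1 : gHeis n p s ε ξ = ∫ η in {η : Heis n | ε ≤ hd η}, f η ∂(nu n p s) := by
    rw [setIntegral_nu n p s hE, ← (measurePreserving_Hmul (Hinv ξ)).setIntegral_preimage_emb
      (measurableEmbedding_Hmul _)]
    simp only [hf, x1_Hmul_Hinv, ← ha, add_sub_cancel]
    rfl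
  have s2 : a ^ (s * p) * ∫ η in {η : Heis n | ε ≤ hd η}, f η ∂(nu n p s) =
      a ^ (s * (p - 1)) * gModel n p s (ε / a) := by
    have hd' := (continuous_dil (n := n) a).measurable
    have h1 := setIntegral_map (μ := nu n p s) (g := dil a) (f := f) hE
      hfm.aestronglyMeasurable hd'.aemeasurable
    rw [map_dil_nu n p s hξ, Measure.restrict_smul, integral_smul_measure,
      ENNReal.toReal_ofReal (by positivity), smul_eq_mul] at h1
    rw [h1, gModel, ← integral_const_mul]
    have hpre : dil a ⁻¹' {η : Heis n | ε ≤ hd η} = {η : Heis n | ε / a ≤ hd η} := by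
      ext η
      simp only [Set.mem_preimage, Set.mem_ofPred_eq]
      rw [hd_dil hξ, div_le_iff₀' hξ]
    rw [hpre]
    congr 1
    ext η
    have hmx : max (a + a * x1 η) 0 = a * max (1 + x1 η) 0 := by
      rw [mul_max_of_nonneg _ _ hξ.le]; ring_nf
    simp only [hf, x1_dil, prof]
    rw [hmx, Real.mul_rpow hξ.le (le_max_right _ _), Real.rpow_mul hξ.le,
      ← Jp_mul (Real.rpow_pos_of_pos hξ s)]
    congr 1; ring
  have hpos : 0 < a ^ (s * p) := by positivity
  rw [s1]
  refine mul_left_cancel₀ hpos.ne' ?_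
  rw [s2, ← mul_assoc, ← Real.rpow_add hξ]
  congr 2; ring

/-- Lemma 3.4: `g_ε → 0` strongly in `L¹_loc(ℍⁿ₊)` as `ε → 0⁺`. -/
theorem gHeis_tendsto_L1loc (n : ℕ) (hn : 1 ≤ n) (p s : ℝ)
    (hp1 : 1 < p) (hs0 : 0 < s) (hs1 : s < 1)
    (K : Set (Heis n)) (hK : IsCompact K) (hKsub : K ⊆ halfSpace n) :
    Tendsto (fun ε => ∫ ξ in K, |gHeis n p s ε ξ|)
      (nhdsWithin (0 : ℝ) (Set.Ioi 0)) (nhds 0) := by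
  rcases K.eq_empty_or_nonempty with rfl | hne
  · simp
  obtain ⟨ξ₀, hξ₀, hmin⟩ := hK.exists_isMinOn hne (continuous_x1 (n := n)).continuousOn
  set m := x1 ξ₀ with hm
  have hm0 : 0 < m := hKsub hξ₀
  have hle : ∀ ξ ∈ K, m ≤ x1 ξ := fun ξ hξ => hmin hξ
  obtain ⟨V, hV⟩ : ∃ V, V = volume.real K := ⟨_, rfl⟩
  have hV0 : 0 ≤ V := by rw [hV]; exact measureReal_nonneg
  rw [Metric.tendsto_nhds]
  intro η hη
  -- `c` is chosen so that `m^{-s} c |K| < η`, with `+ 1` guarding against `|K| = 0`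
  set c := η / (m ^ (-s) * V + 1) with hc
  have hD : 0 < m ^ (-s) * V + 1 := by positivity
  have hc0 : 0 < c := by positivity
  have hG := (Metric.tendsto_nhdsWithin_nhds.1 (tendsto_gModel (n := n) hp1 hs0 hs1)) c hc0
  obtain ⟨δ, hδ, hG⟩ := hG
  filter_upwards [Ioo_mem_nhdsGT (mul_pos hδ hm0)] with ε hε
  -- the smallness of `ε / x₁` is uniform on `K` because `x₁ ≥ m` there
  have hb : ∀ ξ ∈ K, ‖|gHeis n p s ε ξ|‖ ≤ m ^ (-s) * c := by
    intro ξ hξ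
    have hx := hle ξ hξ
    have hx0 : 0 < x1 ξ := hm0.trans_le hx
    have hq : 0 < ε / x1 ξ := div_pos hε.1 hx0
    have hq1 : ε / x1 ξ < δ := by
      rw [div_lt_iff₀ hx0]
      exact hε.2.trans_le (mul_le_mul_of_nonneg_left hx hδ.le)
    have h1 := hG hq (by rw [dist_zero_right, Real.norm_of_nonneg hq.le]; exact hq1)
    rw [dist_zero_right, Real.norm_eq_abs] at h1
    rw [norm_abs_eq_norm, gHeis_eq hx0, norm_mul, Real.norm_of_nonneg (by positivity),
      Real.norm_eq_abs]
    exact mul_le_mul (Real.rpow_le_rpow_of_nonpos hm0 hx (by linarith)) h1.le (abs_nonneg _)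
      (by positivity)
  have := norm_setIntegral_le_of_norm_le_const (μ := (volume : Measure (Heis n)))
    hK.measure_lt_top hb
  rw [dist_zero_right]
  refine this.trans_lt ?_
  rw [← hV, hc, mul_right_comm, mul_div_assoc', div_lt_iff₀ hD]
  nlinarith
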